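/- There exist an absolute constant K > 0 and x₀ ≥ 1 such that for every integer n ≥ 1 and every real x ≥ x₀ one has |S(√x; n) − cₙ·x| ≤ K·2^{−n}·x^{1/4}, where cₙ = −(π/(√2·2ⁿ·n·(n+3/2)))·∏_{k=1}^{n−1}(1 − 1/(2k)). -/

import Mathlib

open Real

/-- `r₂(m)`: the number of representations of `m` as a sum of two squares of integers. -/
noncomputable def r2 (m : ℕ) : ℕ :=
  Set.ncard {p : ℤ × ℤ | p.1 ^ 2 + p.2 ^ 2 = (m : ℤ)}

/-- The coefficients `C₀ = √2` and `Cₙ = −(1/(√2·2ⁿ·n))·∏_{k=1}^{n−1}(1 − 1/(2k))` for `n ≥ 1`. -/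
noncomputable def Ccoef (n : ℕ) : ℝ :=
  if n = 0 then Real.sqrt 2
  else -(1 / (Real.sqrt 2 * 2 ^ n * n)) * ∏ k ∈ Finset.Icc 1 (n - 1), (1 - 1 / (2 * (k : ℝ)))

/-- `S(√x; n) = Cₙ·x^{1/4−n/2}·Σ_{m ∈ ℕ, m ≤ √x} r₂(m)·(√x − m)^{n+1/2}`. -/
noncomputable def Sxn (x : ℝ) (n : ℕ) : ℝ :=
  Ccoef n * x ^ ((1 : ℝ) / 4 - n / 2) *
    ∑ m ∈ Finset.range (⌊Real.sqrt x⌋₊ + 1),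
      (r2 m : ℝ) * (Real.sqrt x - m) ^ ((n : ℝ) + 1 / 2)

/-- `cₙ = −(π/(√2·2ⁿ·n·(n+3/2)))·∏_{k=1}^{n−1}(1 − 1/(2k))` for `n ≥ 1`. -/
noncomputable def cn (n : ℕ) : ℝ :=
  -(Real.pi / (Real.sqrt 2 * 2 ^ n * n * (n + 3 / 2))) *
    ∏ k ∈ Finset.Icc 1 (n - 1), (1 - 1 / (2 * (k : ℝ)))


noncomputable def phi (u : ℝ) : ℝ := u * √u

lemma phi_cont : Continuous phi := by unfold phi; fun_prop

lemma phi_zero {u : ℝ} (h : u ≤ 0) : phi u = 0 := by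
  simp [phi, Real.sqrt_eq_zero_of_nonpos h]

lemma phi_eq_sqrt (u : ℝ) : phi u = √u ^ 3 := by
  rcases le_total u 0 with h | h
  · simp [phi, Real.sqrt_eq_zero_of_nonpos h]
  · unfold phi
    nth_rw 1 [← Real.sq_sqrt h]
    ring

open FourierTransform in
noncomputable def GG (T l s : ℝ) : ℂ := 𝓕 (fun y : ℝ => ((phi (T - s ^ 2 - y ^ 2) : ℝ) : ℂ)) l

lemma GG_eq (T l s : ℝ) : GG T l s =
    (√(T - s ^ 2) : ℂ) ^ 4 * ∫ θ in (-(π / 2))..(π / 2),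
      (Real.cos θ : ℂ) ^ 4 * Complex.exp (((-2 * π * (√(T - s ^ 2) * Real.sin θ) * l : ℝ) : ℂ) * Complex.I) := by
  set ρ := √(T - s ^ 2) with hρ
  have hρ0 : 0 ≤ ρ := Real.sqrt_nonneg _
  unfold GG
  rw [Real.fourier_real_eq_integral_exp_smul]
  set g : ℝ → ℂ := fun v => Complex.exp (((-2 * π * v * l : ℝ) : ℂ) * Complex.I) •
    ((phi (T - s ^ 2 - v ^ 2) : ℝ) : ℂ) with hg
  have hgc : Continuous g := by
    have := phi_cont
    simp only [hg]; fun_prop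
  have h1 : ∫ v, g v = ∫ v in (-ρ)..ρ, g v := by
    rw [intervalIntegral.integral_eq_integral_of_support_subset]
    intro v hv
    by_contra hn
    apply hv
    have : T - s ^ 2 - v ^ 2 ≤ 0 := by
      rcases le_total (T - s ^ 2) 0 with h | h
      · nlinarith [sq_nonneg v]
      · have h2 : ρ ^ 2 = T - s ^ 2 := Real.sq_sqrt h
        by_contra hc
        push Not at hc
        apply hn
        have : |v| < ρ := abs_lt_of_sq_lt_sq (by linarith) hρ0
        exact ⟨(abs_lt.1 this).1, (abs_lt.1 this).2.le⟩
    simp [hg, phi_zero this]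
  rw [h1]
  have h2 := intervalIntegral.integral_deriv_smul_comp (a := -(π / 2)) (b := π / 2)
    (f := fun θ => ρ * Real.sin θ) (f' := fun θ => ρ * Real.cos θ) (g := g)
    (fun x _ => (Real.hasDerivAt_sin x).const_mul ρ) (by fun_prop) hgc
  simp only [Real.sin_neg, Real.sin_pi_div_two, mul_neg, mul_one] at h2
  rw [← h2, ← intervalIntegral.integral_const_mul]
  apply intervalIntegral.integral_congr
  intro θ hθ
  rw [Set.uIcc_of_le (by linarith [Real.pi_pos])] at hθ
  have hc : 0 ≤ Real.cos θ := Real.cos_nonneg_of_mem_Icc hθ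
  have h3 : ρ * phi (T - s ^ 2 - (ρ * Real.sin θ) ^ 2) = ρ ^ 4 * Real.cos θ ^ 3 := by
    rcases le_total (T - s ^ 2) 0 with h | h
    · have : ρ = 0 := Real.sqrt_eq_zero_of_nonpos h
      simp [this]
    · have h2 : ρ ^ 2 = T - s ^ 2 := Real.sq_sqrt h
      rw [← h2, show ρ ^ 2 - (ρ * Real.sin θ) ^ 2 = (ρ * Real.cos θ) ^ 2 by
        rw [mul_pow, mul_pow, Real.cos_sq']; ring, phi_eq_sqrt, Real.sqrt_sq (by positivity)]
      ring
  have h4 : (ρ : ℂ) * (phi (T - s ^ 2 - (ρ * Real.sin θ) ^ 2) : ℝ) = (ρ : ℂ) ^ 4 * (Real.cos θ : ℂ) ^ 3 := by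
    exact_mod_cast h3
  simp only [hg, Function.comp, smul_eq_mul, Complex.real_smul]
  push_cast at h4 ⊢
  linear_combination Complex.cos ↑θ * Complex.exp (-2 * ↑π * (↑ρ * Complex.sin ↑θ) * ↑l * Complex.I) * h4

lemma GG_cont (T l : ℝ) : Continuous (GG T l) := by
  have : GG T l = fun s => _ := funext (GG_eq T l)
  rw [this]
  refine Continuous.mul (by fun_prop) ?_
  apply intervalIntegral.continuous_parametric_intervalIntegral_of_continuous'
  fun_prop

lemma GG_zero_of (T l s : ℝ) (h : T ≤ s ^ 2) : GG T l s = 0 := by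
  rw [GG_eq, Real.sqrt_eq_zero_of_nonpos (by linarith)]; simp

lemma GG_at_zero (T s : ℝ) : GG T 0 s = ((3 * π / 8 * √(T - s ^ 2) ^ 4 : ℝ) : ℂ) := by
  rw [GG_eq]
  have h : ∫ θ in (-(π / 2))..(π / 2), Real.cos θ ^ 4 = 3 * π / 8 := by
    rw [show (4:ℕ) = 2 + 2 from rfl, integral_cos_pow, integral_cos_sq]
    simp; ring
  have h' : ∫ θ in (-(π / 2))..(π / 2), (Real.cos θ : ℂ) ^ 4 = ((3 * π / 8 : ℝ) : ℂ) := by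
    rw [← h, ← intervalIntegral.integral_ofReal]; simp
  simp only [mul_zero, Complex.ofReal_zero, zero_mul, Complex.exp_zero, mul_one]
  rw [h']; push_cast; ring

lemma trig_int_bound (w : ℝ) (hw : w ≠ 0) :
    ‖∫ θ in (-(π / 2))..(π / 2), (Real.cos θ : ℂ) ^ 4 *
      Complex.exp (((w * Real.sin θ : ℝ) : ℂ) * Complex.I)‖ ≤ 3 * π / w ^ 2 := by
  set e : ℝ → ℂ := fun θ => Complex.exp (((w * Real.sin θ : ℝ) : ℂ) * Complex.I) with he
  have hec : Continuous e := by simp only [he]; fun_prop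
  have hwC : (w : ℂ) * Complex.I ≠ 0 := by simp [hw]
  have hed : ∀ θ, HasDerivAt e (e θ * (w * Real.cos θ * Complex.I)) θ := by
    intro θ
    have h1 : HasDerivAt (fun θ : ℝ => ((w * Real.sin θ : ℝ) : ℂ)) ((w * Real.cos θ : ℝ) : ℂ) θ :=
      ((Real.hasDerivAt_sin θ).const_mul w).ofReal_comp
    have := (h1.mul_const Complex.I).cexp
    convert! this using 2
    push_cast; ring
  have hcd : ∀ θ : ℝ, HasDerivAt (fun θ : ℝ => (Real.cos θ : ℂ)) ((-Real.sin θ : ℝ) : ℂ) θ :=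
    fun θ => (Real.hasDerivAt_cos θ).ofReal_comp
  have hsd : ∀ θ : ℝ, HasDerivAt (fun θ : ℝ => (Real.sin θ : ℂ)) ((Real.cos θ : ℝ) : ℂ) θ :=
    fun θ => (Real.hasDerivAt_sin θ).ofReal_comp
  set q : ℂ := w * Complex.I with hq
  have hA : ∀ θ ∈ Set.uIcc (-(π / 2)) (π / 2), HasDerivAt
      (fun θ : ℝ => e θ * (Real.cos θ : ℂ) ^ 3 / q + 3 * (e θ * ((Real.cos θ : ℂ) * (Real.sin θ : ℂ))) / q ^ 2)
      ((Real.cos θ : ℂ) ^ 4 * e θ + 3 / q ^ 2 * (((Real.cos θ : ℂ) ^ 2 - (Real.sin θ : ℂ) ^ 2) * e θ)) θ := by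
    intro θ _
    have := (((hed θ).mul ((hcd θ).pow 3)).div_const q).add
      ((((hed θ).mul ((hcd θ).mul (hsd θ))).const_mul 3).div_const (q ^ 2))
    refine this.congr_deriv ?_
    have hh : (w : ℂ) * Real.cos θ * Complex.I = q * Real.cos θ := by rw [hq]; ring
    rw [hh]
    simp only [Pi.mul_apply, Pi.pow_apply]
    push_cast
    field_simp
    ring
  have hint := intervalIntegral.integral_eq_sub_of_hasDerivAt hA
    (Continuous.intervalIntegrable (by fun_prop) _ _)
  rw [intervalIntegral.integral_add (Continuous.intervalIntegrable (by fun_prop) _ _)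
    (Continuous.intervalIntegrable (by fun_prop) _ _), intervalIntegral.integral_const_mul] at hint
  simp only [Real.cos_neg, Real.cos_pi_div_two, Complex.ofReal_zero] at hint
  have hint2 : ∫ θ in (-(π / 2))..(π / 2), (Real.cos θ : ℂ) ^ 4 * e θ =
    - (3 / q ^ 2 * ∫ θ in (-(π / 2))..(π / 2), (((Real.cos θ : ℂ) ^ 2 - (Real.sin θ : ℂ) ^ 2) * e θ)) := by
    rw [eq_neg_iff_add_eq_zero, hint]; simp
  rw [hint2, norm_neg, norm_mul]
  have hb : ‖∫ θ in (-(π / 2))..(π / 2), (((Real.cos θ : ℂ) ^ 2 - (Real.sin θ : ℂ) ^ 2) * e θ)‖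
      ≤ 1 * |π / 2 - (-(π / 2))| := by
    apply intervalIntegral.norm_integral_le_of_norm_le_const
    intro θ _
    rw [norm_mul, he]
    simp only [Complex.norm_exp_ofReal_mul_I, mul_one]
    rw [show (Real.cos θ : ℂ) ^ 2 - (Real.sin θ : ℂ) ^ 2 = ((Real.cos (2 * θ) : ℝ) : ℂ) by
      rw [Real.cos_two_mul']; push_cast; ring, Complex.norm_real]
    exact Real.abs_cos_le_one _
  rw [show π / 2 - (-(π / 2)) = π by ring, abs_of_pos Real.pi_pos, one_mul] at hb
  have hn : ‖3 / q ^ 2‖ = 3 / w ^ 2 := by simp [hq]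
  rw [hn]
  calc _ ≤ 3 / w ^ 2 * π := by gcongr
    _ = _ := by ring

lemma GG_bound (T l s : ℝ) (hl : l ≠ 0) : ‖GG T l s‖ ≤ (3 * √(T - s ^ 2) ^ 2) * (1 / l ^ 2) := by
  rw [GG_eq]
  set ρ := √(T - s ^ 2) with hρ
  have hρ0 : 0 ≤ ρ := Real.sqrt_nonneg _
  rcases hρ0.eq_or_lt with h | h
  · simp [← h]
  · have := trig_int_bound (-2 * π * ρ * l) (by have := Real.pi_pos; positivity)
    rw [norm_mul]
    simp only [show ∀ θ, -2 * π * (ρ * Real.sin θ) * l = -2 * π * ρ * l * Real.sin θ by intro; ring]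
    rw [show ‖(ρ : ℂ) ^ 4‖ = ρ ^ 4 by simp [abs_of_pos h]]
    calc _ ≤ ρ ^ 4 * (3 * π / (-2 * π * ρ * l) ^ 2) := by gcongr
      _ = (3 * ρ ^ 2) * (1 / l ^ 2) * (1 / (4 * π)) := by
        have := Real.pi_pos
        field_simp; ring
      _ ≤ (3 * ρ ^ 2) * (1 / l ^ 2) * 1 := by
        gcongr
        rw [div_le_one (by positivity)]; linarith [Real.pi_gt_three]
      _ = _ := by ring

open MeasureTheory in
lemma GG_fourier_eq_complex (T k l : ℝ) :
    (∫ s : ℝ, Complex.exp (((-2 * π * s * k : ℝ) : ℂ) * Complex.I) • GG T l s) =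
    ∫ z : ℂ, Complex.exp (((-2 * π * (z.re * k + z.im * l) : ℝ) : ℂ) * Complex.I) *
      ((phi (T - ‖z‖ ^ 2) : ℝ) : ℂ) := by
  have hphi := phi_cont
  rw [← (Complex.volume_preserving_equiv_real_prod.symm).integral_comp
    Complex.measurableEquivRealProd.symm.measurableEmbedding]
  have hz : ∀ p : ℝ × ℝ, ‖Complex.measurableEquivRealProd.symm p‖ ^ 2 = p.1 ^ 2 + p.2 ^ 2 := by
    intro p
    rw [Complex.measurableEquivRealProd_symm_apply, ← Complex.normSq_eq_norm_sq, Complex.normSq_apply]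
    simp; ring
  simp only [hz]
  simp only [Complex.measurableEquivRealProd_symm_apply]
  set F : ℝ × ℝ → ℂ := fun p => Complex.exp (((-2 * π * (p.1 * k + p.2 * l) : ℝ) : ℂ) * Complex.I) *
      ((phi (T - (p.1 ^ 2 + p.2 ^ 2)) : ℝ) : ℂ) with hF
  have hFc : Continuous F := by simp only [hF]; fun_prop
  have hsupp : HasCompactSupport F := by
    apply HasCompactSupport.intro (K := Set.Icc (-√T) (√T) ×ˢ Set.Icc (-√T) (√T))
      (isCompact_Icc.prod isCompact_Icc)
    intro p hp
    have : T - (p.1 ^ 2 + p.2 ^ 2) ≤ 0 := by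
      by_contra hc
      push Not at hc
      apply hp
      constructor
      · exact abs_le.1 (Real.abs_le_sqrt (by nlinarith [sq_nonneg p.2]))
      · exact abs_le.1 (Real.abs_le_sqrt (by nlinarith [sq_nonneg p.1]))
    simp [hF, phi_zero this]
  have hint : Integrable F (volume.prod volume) := hFc.integrable_of_hasCompactSupport hsupp
  change _ = ∫ p, F p ∂(volume.prod volume)
  rw [integral_prod F hint]
  congr 1
  ext s
  unfold GG
  rw [Real.fourier_real_eq_integral_exp_smul, smul_eq_mul, ← integral_const_mul]
  congr 1
  ext y
  simp only [hF, smul_eq_mul]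
  rw [← mul_assoc, ← Complex.exp_add]
  congr 3
  · push_cast; ring
  · ring

open MeasureTheory in
lemma rot_inv (T k l : ℝ) :
    (∫ z : ℂ, Complex.exp (((-2 * π * (z.re * k + z.im * l) : ℝ) : ℂ) * Complex.I) *
      ((phi (T - ‖z‖ ^ 2) : ℝ) : ℂ)) =
    ∫ z : ℂ, Complex.exp (((-2 * π * (z.re * √(k ^ 2 + l ^ 2) + z.im * 0) : ℝ) : ℂ) * Complex.I) *
      ((phi (T - ‖z‖ ^ 2) : ℝ) : ℂ) := by
  by_cases h0 : k ^ 2 + l ^ 2 = 0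
  · have hk : k = 0 := by nlinarith [sq_nonneg k, sq_nonneg l]
    have hl : l = 0 := by nlinarith [sq_nonneg k, sq_nonneg l]
    simp [hk, hl]
  set r := √(k ^ 2 + l ^ 2) with hr
  have hpos : 0 < k ^ 2 + l ^ 2 := lt_of_le_of_ne (by positivity) (Ne.symm h0)
  have hr0 : 0 < r := Real.sqrt_pos.2 hpos
  have hr2 : r ^ 2 = k ^ 2 + l ^ 2 := Real.sq_sqrt hpos.le
  let w : ℂ := ⟨k / r, l / r⟩
  have hw : ‖w‖ = 1 := by
    have : ‖w‖ ^ 2 = 1 := by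
      rw [← Complex.normSq_eq_norm_sq, Complex.normSq_apply]
      simp only [w]
      field_simp
      linarith
    exact (pow_eq_one_iff_of_nonneg (norm_nonneg w) two_ne_zero).1 this
  let c : Circle := ⟨w, by simp [Submonoid.unitSphere, hw]⟩
  have hmp := (rotation c).measurePreserving
  rw [← hmp.integral_comp (rotation c).toHomeomorph.measurableEmbedding]
  congr 1
  ext z
  rw [LinearIsometryEquiv.norm_map]
  congr 5
  rw [rotation_apply]
  have hre : ((c : ℂ) * z).re = k / r * z.re - l / r * z.im := by
    simp [c, w, Complex.mul_re]
  have him : ((c : ℂ) * z).im = k / r * z.im + l / r * z.re := by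
    simp [c, w, Complex.mul_im]
  rw [hre, him]
  field_simp
  linear_combination (-z.re) * hr2

lemma poly_int_bound (R w : ℝ) (hR : 0 ≤ R) (hw : w ≠ 0) :
    ‖∫ s in (-R)..R, Complex.exp (((w * s : ℝ) : ℂ) * Complex.I) * (((R ^ 2 - s ^ 2) ^ 2 : ℝ) : ℂ)‖
      ≤ 64 * R ^ 2 / |w| ^ 3 := by
  set e : ℝ → ℂ := fun s => Complex.exp (((w * s : ℝ) : ℂ) * Complex.I) with he
  have hec : Continuous e := by simp only [he]; fun_prop
  set q : ℂ := w * Complex.I with hq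
  have hq0 : q ≠ 0 := by simp [hq, hw]
  have hed : ∀ s, HasDerivAt e (e s * q) s := by
    intro s
    have h1 : HasDerivAt (fun s : ℝ => ((w * s : ℝ) : ℂ)) ((w * 1 : ℝ) : ℂ) s :=
      ((hasDerivAt_id s).const_mul w).ofReal_comp
    have := (h1.mul_const Complex.I).cexp
    convert! this using 2
    push_cast; rw [hq]; ring
  have hne : ∀ s, ‖e s‖ = 1 := fun s => by simp only [he, Complex.norm_exp_ofReal_mul_I]
  have hid : ∀ s : ℝ, HasDerivAt (fun s : ℝ => (s : ℂ)) 1 s := fun s => by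
    simpa using (hasDerivAt_id s).ofReal_comp
  have hA : ∀ s ∈ Set.uIcc (-R) R, HasDerivAt
      (fun s : ℝ => e s * (((R : ℂ) ^ 2 - s ^ 2) ^ 2 / q + 4 * s * (R ^ 2 - s ^ 2) / q ^ 2
        + (12 * s ^ 2 - 4 * R ^ 2) / q ^ 3))
      (e s * (((R ^ 2 - s ^ 2) ^ 2 : ℝ) : ℂ) + 24 / q ^ 3 * (e s * s)) s := by
    intro s _
    have hp2 := (((hid s).pow 2).const_sub ((R : ℂ) ^ 2))
    have h1 := (hp2.pow 2).div_const q
    have h2 := (((hid s).const_mul 4).mul hp2).div_const (q ^ 2)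
    have h3 := ((((hid s).pow 2).const_mul 12).sub_const (4 * (R : ℂ) ^ 2)).div_const (q ^ 3)
    have := (hed s).mul ((h1.add h2).add h3)
    refine this.congr_deriv ?_
    simp only [Pi.mul_apply, Pi.pow_apply, Pi.add_apply]
    push_cast
    field_simp
    ring
  have hint := intervalIntegral.integral_eq_sub_of_hasDerivAt hA
    (Continuous.intervalIntegrable (by fun_prop) _ _)
  rw [intervalIntegral.integral_add (Continuous.intervalIntegrable (by fun_prop) _ _)
    (Continuous.intervalIntegrable (by fun_prop) _ _), intervalIntegral.integral_const_mul] at hint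
  have hint2 : ∫ s in (-R)..R, e s * (((R ^ 2 - s ^ 2) ^ 2 : ℝ) : ℂ) =
      e R * (8 * R ^ 2 / q ^ 3) - e (-R) * (8 * R ^ 2 / q ^ 3)
        - 24 / q ^ 3 * ∫ s in (-R)..R, e s * s := by
    rw [eq_sub_iff_add_eq, hint]
    push_cast
    ring
  have hb : ‖∫ s in (-R)..R, e s * s‖ ≤ R * |R - (-R)| := by
    apply intervalIntegral.norm_integral_le_of_norm_le_const
    intro s hs
    rw [Set.uIoc_of_le (by linarith)] at hs
    rw [norm_mul, hne, one_mul, Complex.norm_real, Real.norm_eq_abs, abs_le]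
    exact ⟨hs.1.le, hs.2⟩
  rw [show R - (-R) = 2 * R by ring, abs_of_nonneg (by linarith)] at hb
  have hq3 : ‖q ^ 3‖ = |w| ^ 3 := by simp [hq]
  have hw3 : 0 < |w| ^ 3 := by positivity
  rw [hint2]
  have t1 : ‖(8 * (R : ℂ) ^ 2 / q ^ 3)‖ = 8 * R ^ 2 / |w| ^ 3 := by
    rw [norm_div, hq3]; simp
  have t2 : ‖24 / q ^ 3‖ = 24 / |w| ^ 3 := by
    rw [norm_div, hq3]; simp
  calc _ ≤ ‖e R * (8 * R ^ 2 / q ^ 3)‖ + ‖e (-R) * (8 * R ^ 2 / q ^ 3)‖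
        + ‖24 / q ^ 3 * ∫ s in (-R)..R, e s * s‖ := by
          refine (norm_sub_le _ _).trans ?_
          gcongr
          exact norm_sub_le _ _
    _ ≤ 8 * R ^ 2 / |w| ^ 3 + 8 * R ^ 2 / |w| ^ 3 + 24 / |w| ^ 3 * (R * (2 * R)) := by
      rw [norm_mul, norm_mul, norm_mul, hne, hne, t1, t2]
      gcongr <;> simp
    _ = _ := by ring

open FourierTransform in
lemma fourier_GG (T k l : ℝ) (hT : 0 ≤ T) : 𝓕 (GG T l) k = ((3 * π / 8 : ℝ) : ℂ) *
    ∫ s in (-√T)..√T, Complex.exp (((-2 * π * √(k ^ 2 + l ^ 2) * s : ℝ) : ℂ) * Complex.I) *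
      (((√T ^ 2 - s ^ 2) ^ 2 : ℝ) : ℂ) := by
  rw [Real.fourier_real_eq_integral_exp_smul, GG_fourier_eq_complex, rot_inv,
    ← GG_fourier_eq_complex, ← intervalIntegral.integral_const_mul]
  rw [← intervalIntegral.integral_eq_integral_of_support_subset (a := -√T) (b := √T)]
  · apply intervalIntegral.integral_congr
    intro s hs
    rw [Set.uIcc_of_le (by linarith [Real.sqrt_nonneg T])] at hs
    have h1 : s ^ 2 ≤ T := by
      rw [← Real.sq_sqrt hT]
      exact sq_le_sq' hs.1 hs.2
    simp only [smul_eq_mul]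
    rw [GG_at_zero, Real.sq_sqrt hT, show √(T - s ^ 2) ^ 4 = (√(T - s ^ 2) ^ 2) ^ 2 by ring,
      Real.sq_sqrt (by linarith)]
    rw [show -2 * π * s * √(k ^ 2 + l ^ 2) = -2 * π * √(k ^ 2 + l ^ 2) * s by ring]
    push_cast; ring
  · intro s hs
    by_contra hn
    apply hs
    have : T ≤ s ^ 2 := by
      by_contra hc
      push Not at hc
      have := abs_lt.1 (Real.lt_sqrt (abs_nonneg s) |>.2 (by rwa [sq_abs]))
      exact hn ⟨this.1, this.2.le⟩
    simp [GG_zero_of T 0 s this]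

open FourierTransform in
lemma fourier_GG_bound (T k l : ℝ) (hT : 0 ≤ T) (h : 0 < k ^ 2 + l ^ 2) :
    ‖𝓕 (GG T l) k‖ ≤ T / √(k ^ 2 + l ^ 2) ^ 3 := by
  have hr := Real.sqrt_pos.2 h
  have hpi := Real.pi_pos
  rw [fourier_GG T k l hT, norm_mul]
  have := poly_int_bound (√T) (-2 * π * √(k ^ 2 + l ^ 2)) (Real.sqrt_nonneg _)
    (by have := Real.pi_pos; positivity)
  rw [Real.sq_sqrt hT] at this ⊢
  rw [Complex.norm_real, Real.norm_eq_abs, abs_of_pos (by positivity)]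
  have e1 : |-2 * π * √(k ^ 2 + l ^ 2)| = 2 * π * √(k ^ 2 + l ^ 2) := by
    rw [abs_mul, abs_mul, abs_of_pos hr, abs_of_pos hpi]; norm_num
  rw [e1] at this
  calc _ ≤ (3 * π / 8) * (64 * T / (2 * π * √(k ^ 2 + l ^ 2)) ^ 3) := by gcongr
    _ = T / √(k ^ 2 + l ^ 2) ^ 3 * (3 / π ^ 2) := by field_simp; ring
    _ ≤ T / √(k ^ 2 + l ^ 2) ^ 3 * 1 := by
      gcongr
      rw [div_le_one (by positivity)]
      nlinarith [Real.pi_gt_three]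
    _ = _ := by ring

open FourierTransform in
lemma fourier_GG_zero (T : ℝ) (hT : 0 ≤ T) :
    𝓕 (GG T 0) 0 = ((2 * π / 5 * √T ^ 5 : ℝ) : ℂ) := by
  rw [fourier_GG T 0 0 hT]
  set R := √T
  have h : ∫ s in (-R)..R, (R ^ 2 - s ^ 2) ^ 2 = 16 / 15 * R ^ 5 := by
    have hd : ∀ s ∈ Set.uIcc (-R) R, HasDerivAt
      (fun s : ℝ => R ^ 4 * s - 2 * R ^ 2 / 3 * s ^ 3 + s ^ 5 / 5) ((R ^ 2 - s ^ 2) ^ 2) s := by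
      intro s _
      have := (((hasDerivAt_id s).const_mul (R ^ 4)).sub
        ((hasDerivAt_pow 3 s).const_mul (2 * R ^ 2 / 3))).add ((hasDerivAt_pow 5 s).div_const 5)
      refine this.congr_deriv ?_
      norm_num
      ring
    rw [intervalIntegral.integral_eq_sub_of_hasDerivAt hd
      (Continuous.intervalIntegrable (by fun_prop) _ _)]
    ring
  have h' : ∫ s in (-R)..R, (((R ^ 2 - s ^ 2) ^ 2 : ℝ) : ℂ) = ((16 / 15 * R ^ 5 : ℝ) : ℂ) := by
    rw [← h, intervalIntegral.integral_ofReal]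
  simp only [ne_eq, OfNat.ofNat_ne_zero, not_false_eq_true, zero_pow, add_zero, Real.sqrt_zero,
    mul_zero, zero_mul, Complex.ofReal_zero, Complex.exp_zero, one_mul]
  rw [h']
  push_cast; ring

lemma isBigO_of_compact (f : ℝ → ℂ) (R : ℝ) (h : ∀ x, R < |x| → f x = 0) :
    f =O[Filter.cocompact ℝ] (fun x : ℝ => |x| ^ (-(2 : ℝ))) := by
  have hev : f =ᶠ[Filter.cocompact ℝ] 0 := by
    have := (tendsto_norm_cocompact_atTop (E := ℝ)).eventually (Filter.eventually_gt_atTop R)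
    filter_upwards [this] with x hx
    exact h x hx
  exact hev.trans_isBigO (Asymptotics.isBigO_zero _ _)

open FourierTransform in
lemma poisson_simple (f : ℝ → ℂ) (R : ℝ) (hc : Continuous f) (h : ∀ x, R < |x| → f x = 0)
    (hs : Summable fun n : ℤ => 𝓕 f n) : ∑' n : ℤ, f n = ∑' n : ℤ, 𝓕 f n := by
  have := Real.tsum_eq_tsum_fourier_of_rpow_decay_of_summable hc (b := 2) (by norm_num)
    (isBigO_of_compact f R h) hs 0
  simpa using this

noncomputable def hh (k : ℤ) : ℝ := 1 / √(1 + |(k : ℝ)|) ^ 3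

lemma hh_nonneg (k : ℤ) : 0 ≤ hh k := by unfold hh; positivity

lemma hh_summable : Summable hh := by
  have h1 := Real.summable_abs_int_rpow (b := 3 / 2) (by norm_num)
  refine Summable.of_norm_bounded_eventually h1 ?_
  have : {(0 : ℤ)}ᶜ ∈ Filter.cofinite := (Set.finite_singleton 0).compl_mem_cofinite
  filter_upwards [this] with k hk
  have hk0 : 0 < |(k : ℝ)| := by
    have : k ≠ 0 := hk
    positivity
  rw [Real.norm_of_nonneg (hh_nonneg k), Real.rpow_neg hk0.le, hh, one_div]
  gcongr
  rw [show (3 / 2 : ℝ) = (1 / 2 : ℝ) * (3 : ℕ) by norm_num, Real.rpow_mul hk0.le, Real.rpow_natCast,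
    ← Real.sqrt_eq_rpow]
  gcongr
  linarith

lemma lattice_bound (k l : ℤ) (h : ¬ (l = 0 ∧ k = 0)) :
    1 / √((k : ℝ) ^ 2 + (l : ℝ) ^ 2) ^ 3 ≤ 8 * (hh l * hh k) := by
  have hD : (1 + |(k : ℝ)|) * (1 + |(l : ℝ)|) / 4 ≤ (k : ℝ) ^ 2 + (l : ℝ) ^ 2 := by
    have hk : |(k : ℝ)| ≤ (k : ℝ) ^ 2 := by
      rw [← sq_abs]
      have : |k| ≤ |k| ^ 2 := by nlinarith [abs_nonneg k, sq_abs k, Int.le_self_sq (|k|)]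
      exact_mod_cast this
    have hl : |(l : ℝ)| ≤ (l : ℝ) ^ 2 := by
      rw [← sq_abs]
      have : |l| ≤ |l| ^ 2 := by nlinarith [abs_nonneg l, sq_abs l, Int.le_self_sq (|l|)]
      exact_mod_cast this
    have h1 : (1 : ℝ) ≤ (k : ℝ) ^ 2 + (l : ℝ) ^ 2 := by
      have : (1 : ℤ) ≤ k ^ 2 + l ^ 2 := by
        by_contra hc
        have h0 : k ^ 2 + l ^ 2 ≤ 0 := by omega
        apply h
        constructor <;> nlinarith [sq_nonneg k, sq_nonneg l]
      exact_mod_cast this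
    nlinarith [sq_nonneg (|(k : ℝ)| - |(l : ℝ)|), sq_abs (k : ℝ), sq_abs (l : ℝ)]
  have hs : √(1 + |(k : ℝ)|) * √(1 + |(l : ℝ)|) / 2 ≤ √((k : ℝ) ^ 2 + (l : ℝ) ^ 2) := by
    apply Real.le_sqrt_of_sq_le
    rw [div_pow, mul_pow, Real.sq_sqrt (by positivity), Real.sq_sqrt (by positivity)]
    linarith
  calc _ ≤ 1 / (√(1 + |(k : ℝ)|) * √(1 + |(l : ℝ)|) / 2) ^ 3 := by gcongr
    _ = _ := by unfold hh; field_simp; norm_num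

lemma lattice_sum_bound : ∃ K : ℝ, 0 < K ∧ ∀ T : ℝ, 0 ≤ T →
    ‖(∑' a : ℤ, ∑' b : ℤ, ((phi (T - (a : ℝ) ^ 2 - (b : ℝ) ^ 2) : ℝ) : ℂ))
      - ((2 * π / 5 * √T ^ 5 : ℝ) : ℂ)‖ ≤ K * T := by
  have hprod : Summable (fun p : ℤ × ℤ => hh p.1 * hh p.2) :=
    hh_summable.mul_of_nonneg hh_summable hh_nonneg hh_nonneg
  refine ⟨∑' p : ℤ × ℤ, 8 * (hh p.1 * hh p.2) + 1, ?_, ?_⟩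
  · have : 0 ≤ ∑' p : ℤ × ℤ, 8 * (hh p.1 * hh p.2) :=
      tsum_nonneg fun p => by have := hh_nonneg p.1; have := hh_nonneg p.2; positivity
    linarith
  intro T hT
  have hphi := phi_cont
  have hsq : ∀ x : ℝ, √T < |x| → T ≤ x ^ 2 := by
    intro x hx
    have := Real.sq_sqrt hT
    rw [← sq_abs x]
    nlinarith [Real.sqrt_nonneg T]
  -- summability of the one-dimensional transforms
  have hGs : ∀ s : ℝ, Summable fun l : ℤ => GG T l s := by
    intro s
    have h1 : Summable fun l : ℤ => (3 * √(T - s ^ 2) ^ 2) * (1 / (l : ℝ) ^ 2) :=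
      (Real.summable_one_div_int_pow.2 (by norm_num)).mul_left _
    refine Summable.of_norm_bounded_eventually h1 ?_
    have : {(0 : ℤ)}ᶜ ∈ Filter.cofinite := (Set.finite_singleton 0).compl_mem_cofinite
    filter_upwards [this] with l hl
    exact GG_bound T l s (by have : l ≠ 0 := hl; exact_mod_cast this)
  have step1 : ∀ a : ℤ, ∑' b : ℤ, ((phi (T - (a : ℝ) ^ 2 - (b : ℝ) ^ 2) : ℝ) : ℂ)
      = ∑' l : ℤ, GG T l a := by
    intro a
    have := poisson_simple (fun y : ℝ => ((phi (T - (a : ℝ) ^ 2 - y ^ 2) : ℝ) : ℂ)) (√T)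
      (by fun_prop) (by
        intro x hx
        rw [phi_zero (by nlinarith [hsq x hx, sq_nonneg (a : ℝ)])]; simp) (hGs a)
    exact this
  -- the two-dimensional transform
  let H : ℤ × ℤ → ℂ := fun p => FourierTransform.fourier (GG T p.1) (p.2 : ℝ)
  have hHb : ∀ p : ℤ × ℤ, p ≠ 0 → ‖H p‖ ≤ T * (8 * (hh p.1 * hh p.2)) := by
    rintro ⟨l, k⟩ hp
    have hne : ¬ (l = 0 ∧ k = 0) := by
      rintro ⟨rfl, rfl⟩; exact hp rfl
    have hpos : 0 < (k : ℝ) ^ 2 + (l : ℝ) ^ 2 := by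
      rcases not_and_or.1 hne with h | h <;> positivity
    refine (fourier_GG_bound T k l hT hpos).trans ?_
    rw [div_eq_mul_one_div]
    gcongr
    exact lattice_bound k l hne
  have hHs : Summable H := by
    refine Summable.of_norm_bounded_eventually ((hprod.mul_left 8).mul_left T) ?_
    have : {(0 : ℤ × ℤ)}ᶜ ∈ Filter.cofinite := (Set.finite_singleton 0).compl_mem_cofinite
    filter_upwards [this] with p hp
    exact hHb p hp
  have step3 : ∀ l : ℤ, ∑' a : ℤ, GG T l a = ∑' k : ℤ, H (l, k) := by
    intro l
    exact poisson_simple (GG T l) (√T) (GG_cont T l)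
      (fun x hx => GG_zero_of T l x (hsq x hx)) (hHs.prod_factor l)
  have step2 : ∑' a : ℤ, ∑' l : ℤ, GG T l a = ∑' l : ℤ, ∑' a : ℤ, GG T l a := by
    set N : ℤ := ⌈√T⌉ with hN
    have hout : ∀ a : ℤ, a ∉ Finset.Icc (-N) N → ∀ l : ℝ, GG T l a = 0 := by
      intro a ha l
      apply GG_zero_of
      apply hsq
      by_contra hc
      push Not at hc
      have h1 := abs_le.1 (hc.trans (Int.le_ceil (√T)))
      apply ha
      rw [Finset.mem_Icc]
      constructor
      · exact_mod_cast h1.1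
      · exact_mod_cast h1.2
    rw [tsum_eq_sum (s := Finset.Icc (-N) N) (fun a ha => by simp [hout a ha]),
      ← Summable.tsum_finsetSum (f := fun (a : ℤ) (l : ℤ) => GG T l a) (fun a _ => hGs (a : ℝ))]
    congr 1
    ext l
    rw [tsum_eq_sum (s := Finset.Icc (-N) N) (fun a ha => hout a ha l)]
  have step4 : ∑' a : ℤ, ∑' b : ℤ, ((phi (T - (a : ℝ) ^ 2 - (b : ℝ) ^ 2) : ℝ) : ℂ) = ∑' p, H p := by
    rw [hHs.tsum_prod, tsum_congr step1, step2, tsum_congr step3]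
  have h0 : H 0 = ((2 * π / 5 * √T ^ 5 : ℝ) : ℂ) := by
    simp only [H, Prod.fst_zero, Prod.snd_zero, Int.cast_zero]
    exact fourier_GG_zero T hT
  rw [step4, hHs.tsum_eq_add_tsum_ite 0, h0, add_sub_cancel_left]
  have : ‖∑' p : ℤ × ℤ, (if p = 0 then 0 else H p)‖ ≤ ∑' p : ℤ × ℤ, T * (8 * (hh p.1 * hh p.2)) := by
    apply tsum_of_norm_bounded ((hprod.mul_left 8).mul_left T).hasSum
    intro p
    split_ifs with hp
    · have := hh_nonneg p.1; have := hh_nonneg p.2; simp; positivity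
    · exact hHb p hp
  rw [tsum_mul_left] at this
  refine this.trans ?_
  nlinarith

noncomputable def PS (n : ℕ) (T : ℝ) : ℝ :=
  ∑ m ∈ Finset.range (⌊T⌋₊ + 1), (r2 m : ℝ) * (T - m) ^ ((n : ℝ) + 1 / 2)

lemma rpow_three_half {u : ℝ} (hu : 0 ≤ u) : u ^ (((1 : ℕ) : ℝ) + 1 / 2) = phi u := by
  rcases hu.eq_or_lt with h | h
  · rw [← h, Real.zero_rpow (by norm_num)]; simp [phi]
  · rw [Real.rpow_add h, phi, Real.sqrt_eq_rpow]; simp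

lemma r2_eq_card (N m : ℕ) (h : m ≤ N) : r2 m =
    ((Finset.Icc (-(N : ℤ)) N ×ˢ Finset.Icc (-(N : ℤ)) N).filter
      (fun p : ℤ × ℤ => (p.1 ^ 2 + p.2 ^ 2).toNat = m)).card := by
  unfold r2
  rw [← Set.ncard_coe_finset]
  congr 1
  ext ⟨a, b⟩
  simp only [Set.mem_ofPred_eq, Finset.coe_filter, Finset.mem_product, Finset.mem_Icc]
  have h0 : 0 ≤ a ^ 2 + b ^ 2 := by positivity
  constructor
  · intro hab
    have hN : (m : ℤ) ≤ N := by exact_mod_cast h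
    have ha : a ^ 2 ≤ N := by nlinarith [sq_nonneg b]
    have hb : b ^ 2 ≤ N := by nlinarith [sq_nonneg a]
    have key : ∀ c : ℤ, c ^ 2 ≤ N → -(N : ℤ) ≤ c ∧ c ≤ N := by
      intro c hc
      have h1 := Int.le_self_sq c
      have h2 := Int.le_self_sq (-c)
      rw [neg_sq] at h2
      constructor <;> linarith
    refine ⟨⟨key a ha, key b hb⟩, ?_⟩
    omega
  · rintro ⟨_, h1⟩
    omega

lemma PS_one (T : ℝ) (hT : 0 ≤ T) : ((PS 1 T : ℝ) : ℂ) =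
    ∑' a : ℤ, ∑' b : ℤ, ((phi (T - (a : ℝ) ^ 2 - (b : ℝ) ^ 2) : ℝ) : ℂ) := by
  set N := ⌊T⌋₊ with hN
  set B : Finset ℤ := Finset.Icc (-(N : ℤ)) N with hB
  have hlt : T < N + 1 := Nat.lt_floor_add_one T
  have hout : ∀ a : ℤ, a ∉ B → T ≤ (a : ℝ) ^ 2 := by
    intro a ha
    have h1 : (N : ℤ) + 1 ≤ |a| := by
      by_contra hc
      apply ha
      rw [hB, Finset.mem_Icc, ← abs_le]
      omega
    have h2 : |a| ≤ a ^ 2 := by rw [← sq_abs]; exact Int.le_self_sq _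
    have h3 : (N : ℤ) + 1 ≤ a ^ 2 := h1.trans h2
    have h4 : (N : ℝ) + 1 ≤ (a : ℝ) ^ 2 := by exact_mod_cast h3
    linarith
  have e1 : ∑' a : ℤ, ∑' b : ℤ, ((phi (T - (a : ℝ) ^ 2 - (b : ℝ) ^ 2) : ℝ) : ℂ) =
      ∑ a ∈ B, ∑ b ∈ B, ((phi (T - (a : ℝ) ^ 2 - (b : ℝ) ^ 2) : ℝ) : ℂ) := by
    rw [tsum_eq_sum (s := B)]
    · refine Finset.sum_congr rfl fun a _ => ?_
      rw [tsum_eq_sum (s := B)]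
      intro b hb
      rw [phi_zero (by nlinarith [hout b hb, sq_nonneg (a : ℝ)])]; simp
    · intro a ha
      have : ∀ b : ℤ, ((phi (T - (a : ℝ) ^ 2 - (b : ℝ) ^ 2) : ℝ) : ℂ) = 0 := by
        intro b
        rw [phi_zero (by nlinarith [hout a ha, sq_nonneg (b : ℝ)])]; simp
      simp [this]
  rw [e1]
  have e2 : PS 1 T = ∑ a ∈ B, ∑ b ∈ B, phi (T - (a : ℝ) ^ 2 - (b : ℝ) ^ 2) := by
    rw [← Finset.sum_product' (f := fun a b : ℤ => phi (T - (a : ℝ) ^ 2 - (b : ℝ) ^ 2))]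
    unfold PS
    have hg : ∀ p : ℤ × ℤ, (((p.1 ^ 2 + p.2 ^ 2).toNat : ℕ) : ℝ) = (p.1 : ℝ) ^ 2 + (p.2 : ℝ) ^ 2 := by
      intro p
      have h0 : 0 ≤ p.1 ^ 2 + p.2 ^ 2 := by positivity
      have : (((p.1 ^ 2 + p.2 ^ 2).toNat : ℕ) : ℤ) = p.1 ^ 2 + p.2 ^ 2 := Int.toNat_of_nonneg h0
      exact_mod_cast this
    have e3 : ∀ m ∈ Finset.range (N + 1), (r2 m : ℝ) * (T - m) ^ (((1 : ℕ) : ℝ) + 1 / 2) =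
        ∑ p ∈ (B ×ˢ B).filter (fun p : ℤ × ℤ => (p.1 ^ 2 + p.2 ^ 2).toNat = m),
          phi (T - (p.1 : ℝ) ^ 2 - (p.2 : ℝ) ^ 2) := by
      intro m hm
      have hm' : m ≤ N := by simpa [Nat.lt_succ_iff] using hm
      have hmT : (m : ℝ) ≤ T := le_trans (by exact_mod_cast hm') (Nat.floor_le hT)
      rw [rpow_three_half (by linarith), r2_eq_card N m hm', ← nsmul_eq_mul, ← Finset.sum_const]
      refine Finset.sum_congr rfl fun p hp => ?_
      rw [← (Finset.mem_filter.1 hp).2, hg]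
      congr 1; ring
    rw [Finset.sum_congr rfl e3, Finset.sum_fiberwise_eq_sum_filter]
    apply Finset.sum_filter_of_ne
    intro p _ hne
    by_contra hc
    apply hne
    apply phi_zero
    have h1 : N + 1 ≤ (p.1 ^ 2 + p.2 ^ 2).toNat := by simpa using hc
    have h2 : ((N + 1 : ℕ) : ℝ) ≤ (((p.1 ^ 2 + p.2 ^ 2).toNat : ℕ) : ℝ) := by exact_mod_cast h1
    rw [hg] at h2
    push_cast at h2
    linarith
  rw [e2]; push_cast; rfl

lemma PS_eq_max (n : ℕ) (T t : ℝ) (ht : 0 ≤ t) (htT : t ≤ T) : PS n t =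
    ∑ m ∈ Finset.range (⌊T⌋₊ + 1), (r2 m : ℝ) * (max (t - m) 0) ^ ((n : ℝ) + 1 / 2) := by
  unfold PS
  have hsub : Finset.range (⌊t⌋₊ + 1) ⊆ Finset.range (⌊T⌋₊ + 1) := by
    apply Finset.range_subset_range.2
    have := Nat.floor_le_floor htT
    omega
  rw [← Finset.sum_subset hsub]
  · refine Finset.sum_congr rfl fun m hm => ?_
    have hm' : m ≤ ⌊t⌋₊ := by simpa [Nat.lt_succ_iff] using hm
    have : (m : ℝ) ≤ t := (Nat.le_floor_iff ht).1 hm'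
    rw [max_eq_left (by linarith)]
  · intro m _ hm
    have hm' : ⌊t⌋₊ < m := by simpa using hm
    have : t < m := (Nat.floor_lt ht).1 hm'
    rw [max_eq_right (by linarith), Real.zero_rpow (by positivity), mul_zero]

lemma int_max (α T : ℝ) (m : ℝ) (hα : 0 < α) (hm : 0 ≤ m) (hmT : m ≤ T) :
    ∫ t in (0 : ℝ)..T, (max (t - m) 0) ^ α = (T - m) ^ (α + 1) / (α + 1) := by
  have hc : Continuous fun t : ℝ => (max (t - m) 0) ^ α :=
    (by fun_prop : Continuous fun t : ℝ => max (t - m) 0).rpow_const (fun _ => Or.inr hα.le)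
  rw [← intervalIntegral.integral_add_adjacent_intervals (b := m)
    (hc.intervalIntegrable _ _) (hc.intervalIntegrable _ _)]
  have h1 : ∫ t in (0 : ℝ)..m, (max (t - m) 0) ^ α = 0 := by
    rw [intervalIntegral.integral_congr (g := fun _ => (0 : ℝ))]
    · simp
    · intro t ht
      rw [Set.uIcc_of_le hm] at ht
      simp only
      rw [max_eq_right (by linarith [ht.2]), Real.zero_rpow hα.ne']
  have h2 : ∫ t in m..T, (max (t - m) 0) ^ α = ∫ t in m..T, (fun u => u ^ α) (t - m) := by
    apply intervalIntegral.integral_congr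
    intro t ht
    rw [Set.uIcc_of_le hmT] at ht
    simp only
    rw [max_eq_left (by linarith [ht.1])]
  rw [h1, h2, intervalIntegral.integral_comp_sub_right (fun u : ℝ => u ^ α), sub_self, zero_add,
    integral_rpow (Or.inl (by linarith)), Real.zero_rpow (by linarith), sub_zero]

noncomputable def EE (n : ℕ) (T : ℝ) : ℝ := PS n T - π / (n + 3 / 2) * T ^ ((n : ℝ) + 3 / 2)

lemma EE_succ (n : ℕ) (T : ℝ) (hT : 0 ≤ T) :
    EE (n + 1) T = ((n : ℝ) + 3 / 2) * ∫ t in (0 : ℝ)..T, EE n t := by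
  have hα : 0 < (n : ℝ) + 1 / 2 := by positivity
  have hc1 : ∀ m : ℕ, Continuous fun t : ℝ => (r2 m : ℝ) * (max (t - m) 0) ^ ((n : ℝ) + 1 / 2) :=
    fun m => continuous_const.mul
      ((by fun_prop : Continuous fun t : ℝ => max (t - m) 0).rpow_const (fun _ => Or.inr hα.le))
  have hc2 : Continuous fun t : ℝ => π / (n + 3 / 2) * t ^ ((n : ℝ) + 3 / 2) :=
    continuous_const.mul (continuous_id.rpow_const (fun _ => Or.inr (by positivity)))
  have e1 : ∫ t in (0 : ℝ)..T, EE n t = ∫ t in (0 : ℝ)..T,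
      ((∑ m ∈ Finset.range (⌊T⌋₊ + 1), (r2 m : ℝ) * (max (t - m) 0) ^ ((n : ℝ) + 1 / 2))
        - π / (n + 3 / 2) * t ^ ((n : ℝ) + 3 / 2)) := by
    apply intervalIntegral.integral_congr
    intro t ht
    rw [Set.uIcc_of_le hT] at ht
    simp only [EE]
    rw [PS_eq_max n T t ht.1 ht.2]
  rw [e1, intervalIntegral.integral_sub
    ((continuous_finsetSum _ fun m _ => hc1 m).intervalIntegrable _ _) (hc2.intervalIntegrable _ _),
    intervalIntegral.integral_finsetSum (fun m _ => (hc1 m).intervalIntegrable _ _),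
    intervalIntegral.integral_const_mul, integral_rpow (Or.inl (by linarith)),
    Real.zero_rpow (by positivity), sub_zero, mul_sub]
  unfold EE PS
  congr 1
  · rw [Finset.mul_sum]
    refine Finset.sum_congr rfl fun m hm => ?_
    have hm' : m ≤ ⌊T⌋₊ := by simpa [Nat.lt_succ_iff] using hm
    have hmT : (m : ℝ) ≤ T := (Nat.le_floor_iff hT).1 hm'
    rw [intervalIntegral.integral_const_mul, int_max _ _ _ hα (by positivity) hmT]
    rw [show (n : ℝ) + 1 / 2 + 1 = n + 3 / 2 by ring,
      show (((n + 1 : ℕ) : ℝ) + 1 / 2) = n + 3 / 2 by push_cast; ring]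
    field_simp
  · push_cast
    rw [show (n : ℝ) + 1 + 3 / 2 = n + 3 / 2 + 1 by ring]
    field_simp

lemma EE_bound : ∃ K : ℝ, 0 < K ∧ ∀ n : ℕ, 1 ≤ n → ∀ T : ℝ, 0 ≤ T →
    |EE n T| ≤ K * n * T ^ n := by
  obtain ⟨K, hK, h⟩ := lattice_sum_bound
  refine ⟨K, hK, ?_⟩
  intro n hn
  induction n, hn using Nat.le_induction with
  | base =>
    intro T hT
    have := h T hT
    rw [← PS_one T hT, ← Complex.ofReal_sub, Complex.norm_real, Real.norm_eq_abs] at this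
    have e : EE 1 T = PS 1 T - 2 * π / 5 * √T ^ 5 := by
      unfold EE
      congr 1
      rw [Real.sqrt_eq_rpow, ← Real.rpow_natCast, ← Real.rpow_mul hT]
      norm_num
      left
      ring
    rw [e]; simpa using this
  | succ n hn ih =>
    intro T hT
    rw [EE_succ n T hT, abs_mul, abs_of_pos (by positivity)]
    have hb : ‖∫ t in (0 : ℝ)..T, EE n t‖ ≤ ∫ t in (0 : ℝ)..T, K * n * t ^ n := by
      apply intervalIntegral.norm_integral_le_of_norm_le hT
      · filter_upwards with t ht
        exact ih t ht.1.le
      · exact Continuous.intervalIntegrable (by fun_prop) _ _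
    rw [intervalIntegral.integral_const_mul, integral_pow, Real.norm_eq_abs] at hb
    have hn' : (1 : ℝ) ≤ n := by exact_mod_cast hn
    have hpow : 0 ≤ T ^ (n + 1) := by positivity
    calc _ ≤ ((n : ℝ) + 3 / 2) * (K * n * ((T ^ (n + 1) - 0 ^ (n + 1)) / (n + 1))) := by gcongr
      _ = (K * T ^ (n + 1)) * (((n : ℝ) + 3 / 2) * n / (n + 1)) := by simp; ring
      _ ≤ (K * T ^ (n + 1)) * (n + 1) := by
        gcongr
        rw [div_le_iff₀ (by positivity)]
        nlinarith
      _ = _ := by push_cast; ring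

/-- There are an absolute constant `K > 0` and `x₀ ≥ 1` such that for every `n ≥ 1`
and every `x ≥ x₀`, `|S(√x; n) − cₙ·x| ≤ K·2^{−n}·x^{1/4}`. -/
theorem Sxn_asymptotic :
    ∃ K : ℝ, 0 < K ∧ ∃ x₀ : ℝ, 1 ≤ x₀ ∧
      ∀ n : ℕ, 1 ≤ n → ∀ x : ℝ, x₀ ≤ x →
        |Sxn x n - cn n * x| ≤ K * (2 : ℝ) ^ (-(n : ℝ)) * x ^ ((1 : ℝ) / 4) := by
  obtain ⟨K, hK, h⟩ := EE_bound
  refine ⟨K, hK, 1, le_rfl, ?_⟩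
  intro n hn x hx
  have hx0 : 0 < x := by linarith
  have hn0 : (0 : ℝ) < n := by exact_mod_cast hn
  have hb := h n hn (√x) (Real.sqrt_nonneg x)
  set P : ℝ := ∏ k ∈ Finset.Icc 1 (n - 1), (1 - 1 / (2 * (k : ℝ))) with hP
  have hfac : ∀ k ∈ Finset.Icc 1 (n - 1), 0 ≤ (1 - 1 / (2 * (k : ℝ))) ∧ (1 - 1 / (2 * (k : ℝ))) ≤ 1 := by
    intro k hk
    have h1 : (1 : ℝ) ≤ k := by exact_mod_cast (Finset.mem_Icc.1 hk).1
    constructor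
    · rw [sub_nonneg, div_le_one (by positivity)]; linarith
    · have : 0 ≤ 1 / (2 * (k : ℝ)) := by positivity
      linarith
  have hP0 : 0 ≤ P := Finset.prod_nonneg fun k hk => (hfac k hk).1
  have hP1 : P ≤ 1 := Finset.prod_le_one (fun k hk => (hfac k hk).1) fun k hk => (hfac k hk).2
  have hC : Ccoef n = -(1 / (√2 * 2 ^ n * n)) * P := by
    unfold Ccoef; rw [if_neg (by omega)]
  have hcn : cn n = Ccoef n * (π / (n + 3 / 2)) := by
    rw [hC]; unfold cn; rw [← hP]
    have : 0 < √(2 : ℝ) := by positivity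
    field_simp
  have hxp : x ^ ((1 : ℝ) / 4 - n / 2) * (√x) ^ ((n : ℝ) + 3 / 2) = x := by
    rw [Real.sqrt_eq_rpow, ← Real.rpow_mul hx0.le, ← Real.rpow_add hx0]
    rw [show (1 : ℝ) / 4 - n / 2 + 1 / 2 * (n + 3 / 2) = 1 by ring, Real.rpow_one]
  have hxq : x ^ ((1 : ℝ) / 4 - n / 2) * (√x) ^ n = x ^ ((1 : ℝ) / 4) := by
    rw [← Real.rpow_natCast, Real.sqrt_eq_rpow, ← Real.rpow_mul hx0.le, ← Real.rpow_add hx0]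
    congr 1; ring
  have key : Sxn x n - cn n * x = Ccoef n * (x ^ ((1 : ℝ) / 4 - n / 2) * EE n (√x)) := by
    have e : Sxn x n = Ccoef n * x ^ ((1 : ℝ) / 4 - n / 2) * PS n (√x) := rfl
    rw [e, hcn]
    unfold EE
    linear_combination Ccoef n * (π / (n + 3 / 2)) * hxp
  have hs2 : 1 ≤ √(2 : ℝ) := Real.one_le_sqrt.2 (by norm_num)
  have hCabs : |Ccoef n| ≤ 1 / (2 ^ n * n) := by
    rw [hC, abs_mul, abs_neg, abs_of_nonneg hP0, abs_of_pos (by positivity)]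
    calc _ ≤ 1 / (1 * 2 ^ n * (n : ℝ)) * 1 := by gcongr
      _ = _ := by ring
  rw [key, abs_mul, abs_mul, abs_of_pos (Real.rpow_pos_of_pos hx0 _), Real.rpow_neg (by norm_num),
    Real.rpow_natCast, ← hxq]
  have hxpos := Real.rpow_pos_of_pos hx0 ((1 : ℝ) / 4 - n / 2)
  calc _ ≤ 1 / (2 ^ n * n) * (x ^ ((1 : ℝ) / 4 - n / 2) * (K * n * √x ^ n)) := by gcongr
    _ = _ := by field_simp
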